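/- Let n ≥ 1, L : Fin n → ℝ, and ρ > 0. Then the supremum of Σ_j q_j·L_j over all probability vectors q : Fin n → ℝ (q_j ≥ 0, Σ_j q_j = 1) satisfying the Kullback–Leibler constraint Σ_j q_j·log(n·q_j) ≤ ρ (with the convention 0·log 0 = 0) equals the infimum over λ > 0 of λ·log((1/n)·Σ_j exp(L_j/λ)) + λ·ρ. -/

import Mathlib

/-!
Write `A(t) = log ((1/n) ∑ exp (t L_j))` for the log-moment generating function of `L` under the
uniform distribution, and `q_t` for the exponentially tilted distribution
`q_t(j) = exp (t L_j) / ∑ exp (t L_i)`, where `t = 1/λ`.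

Weak duality is the Donsker–Varadhan inequality `∑ q_j t L_j ≤ A(t) + D(q)`
(`sum_mul_le_logMGF_add_kl`), which follows from Gibbs' inequality. For `q = q_t` it is an equality
(`kl_tilt`), so that the dual objective at `λ = 1/t` is `∑ q_t(j) L_j + λ (ρ - D(q_t))`.

For strong duality, `t ↦ D(q_t)` is continuous and vanishes at `t = 0`. If it reaches the level `ρ`
for some `t > 0`, then `q_t` is feasible there and has primal value equal to the dual value at
`1/t`. Otherwise `D(q_t) < ρ` for every `t > 0`, so every `q_t` is feasible and, as `D ≥ 0`,
the dual value at `λ` exceeds a primal value by at most `λ ρ`; now let `λ → 0`.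
-/

namespace KLDuality

variable {n : ℕ}

/-- Kullback–Leibler divergence of `q` from the uniform distribution on `Fin n`. -/
noncomputable def kl (q : Fin n → ℝ) : ℝ := ∑ j, q j * Real.log (n * q j)

/-- Log-moment generating function of `L` under the uniform distribution on `Fin n`. -/
noncomputable def logMGF (L : Fin n → ℝ) (t : ℝ) : ℝ :=
  Real.log ((1 / (n : ℝ)) * ∑ j, Real.exp (t * L j))

/-- The uniform distribution tilted by the density proportional to `exp (t * L)`. -/
noncomputable def tilt (L : Fin n → ℝ) (t : ℝ) (j : Fin n) : ℝ :=
  Real.exp (t * L j) / ∑ i, Real.exp (t * L i)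

lemma sum_exp_pos (hn : 1 ≤ n) (L : Fin n → ℝ) (t : ℝ) : 0 < ∑ j, Real.exp (t * L j) := by
  have : Nonempty (Fin n) := ⟨⟨0, hn⟩⟩
  exact Finset.sum_pos (fun j _ => Real.exp_pos _) Finset.univ_nonempty

lemma tilt_pos (hn : 1 ≤ n) (L : Fin n → ℝ) (t : ℝ) (j : Fin n) : 0 < tilt L t j :=
  div_pos (Real.exp_pos _) (sum_exp_pos hn L t)

lemma sum_tilt (hn : 1 ≤ n) (L : Fin n → ℝ) (t : ℝ) : ∑ j, tilt L t j = 1 := by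
  unfold tilt
  rw [← Finset.sum_div, div_self (sum_exp_pos hn L t).ne']

lemma log_tilt (hn : 1 ≤ n) (L : Fin n → ℝ) (t : ℝ) (j : Fin n) :
    Real.log (n * tilt L t j) = t * L j - logMGF L t := by
  have hZ := sum_exp_pos hn L t
  have hn' : (0 : ℝ) < n := by exact_mod_cast hn
  have h : (n : ℝ) * tilt L t j
      = Real.exp (t * L j) / ((1 / (n : ℝ)) * ∑ i, Real.exp (t * L i)) := by
    unfold tilt
    field_simp
  rw [h, Real.log_div (Real.exp_pos _).ne' (by positivity), Real.log_exp, logMGF]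

lemma kl_tilt (hn : 1 ≤ n) (L : Fin n → ℝ) (t : ℝ) :
    kl (tilt L t) = t * ∑ j, tilt L t j * L j - logMGF L t := by
  simp only [kl, log_tilt hn, mul_sub, Finset.sum_sub_distrib, ← Finset.sum_mul, sum_tilt hn,
    one_mul, Finset.mul_sum]
  congr 1
  exact Finset.sum_congr rfl fun j _ => by ring

/-- Termwise Gibbs inequality, with a common factor `c` inside both logarithms; at `q = 0` it relies on
`0 * log 0 = 0`. -/
lemma sub_le_mul_log_sub {c p q : ℝ} (hc : 0 < c) (hp : 0 < p) (hq : 0 ≤ q) :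
    q - p ≤ q * (Real.log (c * q) - Real.log (c * p)) := by
  rcases hq.eq_or_lt with rfl | hq
  · simp [hp.le]
  · have h := Real.log_le_sub_one_of_pos (div_pos hp hq)
    rw [Real.log_div hp.ne' hq.ne'] at h
    rw [Real.log_mul hc.ne' hq.ne', Real.log_mul hc.ne' hp.ne']
    have h2 := mul_le_mul_of_nonneg_left h hq.le
    have h3 : q * (p / q - 1) = p - q := by field_simp
    linarith

/-- The Donsker–Varadhan inequality: Gibbs' inequality for `q` against the tilted distribution. -/
lemma sum_mul_le_logMGF_add_kl (hn : 1 ≤ n) (L : Fin n → ℝ) (t : ℝ) {q : Fin n → ℝ}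
    (hq : ∀ j, 0 ≤ q j) (hq1 : ∑ j, q j = 1) :
    t * ∑ j, q j * L j ≤ logMGF L t + kl q := by
  have hn' : (0 : ℝ) < n := by exact_mod_cast hn
  have h := Finset.sum_le_sum fun j (_ : j ∈ Finset.univ) =>
    sub_le_mul_log_sub hn' (tilt_pos hn L t j) (hq j)
  simp only [log_tilt hn, mul_sub, Finset.sum_sub_distrib, ← Finset.sum_mul, sum_tilt hn, hq1,
    one_mul] at h
  have h2 : ∑ j, q j * (t * L j) = t * ∑ j, q j * L j := by
    rw [Finset.mul_sum]
    exact Finset.sum_congr rfl fun j _ => by ring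
  rw [h2] at h
  unfold kl
  linarith

lemma logMGF_zero (hn : 1 ≤ n) (L : Fin n → ℝ) : logMGF L 0 = 0 := by
  have hn' : (n : ℝ) ≠ 0 := by exact_mod_cast (by lia : n ≠ 0)
  simp [logMGF, hn']

lemma kl_nonneg (hn : 1 ≤ n) {q : Fin n → ℝ} (hq : ∀ j, 0 ≤ q j) (hq1 : ∑ j, q j = 1) :
    0 ≤ kl q := by
  have h := sum_mul_le_logMGF_add_kl hn (fun _ => 0) 0 hq hq1
  simpa [logMGF_zero hn] using h

lemma continuous_kl_tilt (hn : 1 ≤ n) (L : Fin n → ℝ) : Continuous fun t => kl (tilt L t) := by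
  have hn' : (0 : ℝ) < n := by exact_mod_cast hn
  have ht : ∀ j, Continuous fun t => tilt L t j := fun j => by
    unfold tilt
    exact Continuous.div (by fun_prop) (by fun_prop) fun t => (sum_exp_pos hn L t).ne'
  unfold kl
  exact continuous_finsetSum _ fun j _ => (ht j).mul
    ((continuous_const.mul (ht j)).log fun t => (mul_pos hn' (tilt_pos hn L t j)).ne')

end KLDuality

open KLDuality in
/-- Finite-sample KL-divergence DRO duality (Hu–Hong): the supremum of
`∑ j, q j * L j` over probability vectors `q` with
`D_KL(q ‖ uniform) = ∑ j, q j * log (n * q j) ≤ ρ` equals the infimum over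
`λ > 0` of `λ · log((1/n) · ∑ j, exp (L j / λ)) + λ·ρ`.
(The convention `0 · log 0 = 0` holds automatically since `Real.log 0 = 0`.) -/
theorem stmt11 (n : ℕ) (hn : 1 ≤ n) (L : Fin n → ℝ) (ρ : ℝ) (hρ : 0 < ρ) :
    sSup {x : ℝ | ∃ q : Fin n → ℝ, (∀ j, 0 ≤ q j) ∧ (∑ j, q j) = 1 ∧
        (∑ j, q j * Real.log (n * q j)) ≤ ρ ∧ x = ∑ j, q j * L j} =
      sInf {y : ℝ | ∃ lam : ℝ, 0 < lam ∧
        y = lam * Real.log ((1 / (n : ℝ)) * ∑ j, Real.exp (L j / lam)) + lam * ρ} := by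
  set P := {x : ℝ | ∃ q : Fin n → ℝ, (∀ j, 0 ≤ q j) ∧ (∑ j, q j) = 1 ∧
        (∑ j, q j * Real.log (n * q j)) ≤ ρ ∧ x = ∑ j, q j * L j} with hP
  set D := {y : ℝ | ∃ lam : ℝ, 0 < lam ∧
        y = lam * Real.log ((1 / (n : ℝ)) * ∑ j, Real.exp (L j / lam)) + lam * ρ} with hD
  have mem_D : ∀ lam : ℝ, 0 < lam → lam * logMGF L lam⁻¹ + lam * ρ ∈ D := fun lam h =>
    ⟨lam, h, by simp only [logMGF, div_eq_inv_mul (L _) lam]⟩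
  have mem_P : ∀ t : ℝ, kl (tilt L t) ≤ ρ → ∑ j, tilt L t j * L j ∈ P := fun t h =>
    ⟨tilt L t, fun j => (tilt_pos hn L t j).le, sum_tilt hn L t, h, rfl⟩
  have weak : ∀ x ∈ P, ∀ y ∈ D, x ≤ y := by
    rintro _ ⟨q, hq, hq1, hqρ, rfl⟩ _ ⟨lam, hlam, rfl⟩
    have h := sum_mul_le_logMGF_add_kl hn L lam⁻¹ hq hq1
    have h2 := mul_le_mul_of_nonneg_left
      (h.trans (add_le_add_right (show kl q ≤ ρ from hqρ) _)) hlam.le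
    rw [mul_inv_cancel_left₀ hlam.ne'] at h2
    simpa only [logMGF, div_eq_inv_mul (L _) lam, mul_add] using h2
  have kl_zero : kl (tilt L 0) = 0 := by rw [kl_tilt hn, logMGF_zero hn]; ring
  have hPne : P.Nonempty := ⟨_, mem_P 0 (kl_zero.trans_le hρ.le)⟩
  have hDne : D.Nonempty := ⟨_, mem_D 1 one_pos⟩
  have hPb : BddAbove P := ⟨_, fun x hx => weak x hx _ (mem_D 1 one_pos)⟩
  have hDb : BddBelow D := ⟨_, fun y hy => weak _ (mem_P 0 (kl_zero.trans_le hρ.le)) y hy⟩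
  -- The dual objective at `lam` in terms of the tilted distribution with parameter `lam⁻¹`.
  have dual_eq : ∀ lam : ℝ, 0 < lam → lam * logMGF L lam⁻¹ + lam * ρ =
      ∑ j, tilt L lam⁻¹ j * L j + lam * (ρ - kl (tilt L lam⁻¹)) := fun lam h => by
    rw [kl_tilt hn]
    field_simp
    ring
  apply le_antisymm
  · exact csSup_le hPne fun x hx => le_csInf hDne fun y hy => weak x hx y hy
  by_cases hex : ∃ t : ℝ, 0 ≤ t ∧ ρ ≤ kl (tilt L t)
  · obtain ⟨t, ht, hρt⟩ := hex
    obtain ⟨s, ⟨hs0, -⟩, hs⟩ := intermediate_value_Icc ht (continuous_kl_tilt hn L).continuousOn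
      (show ρ ∈ Set.Icc _ _ from ⟨by simpa only [kl_zero] using hρ.le, hρt⟩)
    simp only at hs
    have hs_pos : 0 < s := by
      refine hs0.lt_of_ne ?_
      rintro rfl
      exact hρ.ne (kl_zero.symm.trans hs)
    have h := csInf_le hDb (mem_D s⁻¹ (inv_pos.2 hs_pos))
    rw [dual_eq _ (inv_pos.2 hs_pos), inv_inv, hs, sub_self, mul_zero, add_zero] at h
    exact h.trans (le_csSup hPb (mem_P s hs.le))
  · push Not at hex
    refine le_of_forall_pos_le_add fun ε hε => ?_
    -- The duality gap at multiplier `lam` is at most `lam * ρ`, which is `ε` for `lam = ε / ρ`.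
    have hlam : 0 < ε / ρ := div_pos hε hρ
    have h := csInf_le hDb (mem_D _ hlam)
    rw [dual_eq _ hlam] at h
    have h1 := le_csSup hPb (mem_P (ε / ρ)⁻¹ (hex _ (inv_pos.2 hlam).le).le)
    have h2 : 0 ≤ ε / ρ * kl (tilt L (ε / ρ)⁻¹) :=
      mul_nonneg hlam.le (kl_nonneg hn (fun j => (tilt_pos hn L _ j).le) (sum_tilt hn L _))
    have h3 : ε / ρ * ρ = ε := div_mul_cancel₀ ε hρ.ne'
    rw [mul_sub] at h
    linarith
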